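/- Let V be a finite-dimensional irreducible □_q-module. Then each generator x_i (i ∈ ℤ/4ℤ) acts semisimply on V (V is spanned by the eigenspaces of the action of x_i). Moreover there exist d ∈ ℕ and a nonzero γ ∈ F such that the set of distinct eigenvalues of the action of x_0 on V and of x_2 on V equals {γ q^{d−2n} : 0 ≤ n ≤ d}, and the set of distinct eigenvalues of the action of x_1 on V and of x_3 on V equals {γ^{−1} q^{d−2n} : 0 ≤ n ≤ d}. -/

import Mathlib

noncomputable section

open FreeAlgebra

variable (F : Type) [Field F]

/-- The defining relations of the algebra `□_q` (Terwilliger), on the free algebra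
with generators `x_i`, `i ∈ ℤ/4ℤ`. -/
inductive BoxRel (q : F) : FreeAlgebra F (ZMod 4) → FreeAlgebra F (ZMod 4) → Prop
  | rel1 (i : ZMod 4) : BoxRel q
      (q • (ι F i * ι F (i + 1)) - q⁻¹ • (ι F (i + 1) * ι F i))
      ((q - q⁻¹) • (1 : FreeAlgebra F (ZMod 4)))
  | rel2 (i : ZMod 4) : BoxRel q
      (ι F i ^ 3 * ι F (i + 2) +
        ((q ^ 3 - (q⁻¹) ^ 3) / (q - q⁻¹)) • (ι F i * ι F (i + 2) * ι F i ^ 2))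
      (((q ^ 3 - (q⁻¹) ^ 3) / (q - q⁻¹)) • (ι F i ^ 2 * ι F (i + 2) * ι F i) +
        ι F (i + 2) * ι F i ^ 3)

/-- The algebra `□_q`, presented by generators and relations. -/
abbrev BoxQ (q : F) : Type := RingQuot (BoxRel F q)

/-- The generators `x_i` of `□_q`. -/
def bx (q : F) (i : ZMod 4) : BoxQ F q :=
  RingQuot.mkAlgHom F (BoxRel F q) (ι F i)

/-- `f` acts semisimply: `V` is spanned by the eigenspaces of `f`. -/
def SemisimpleOn {V : Type} [AddCommGroup V] [Module F V] (f : Module.End F V) : Prop :=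
  (⨆ θ : F, Module.End.eigenspace f θ) = ⊤

/-- The set of (distinct) eigenvalues of `f`. -/
def EigSet {V : Type} [AddCommGroup V] [Module F V] (f : Module.End F V) : Set F :=
  {θ : F | Module.End.eigenspace f θ ≠ ⊥}

/-- The representation `π` of `A` on `V` is irreducible. -/
def IsIrrep {A V : Type} [Ring A] [Algebra F A] [AddCommGroup V] [Module F V]
    (π : A →ₐ[F] Module.End F V) : Prop :=
  Nontrivial V ∧ ∀ W : Submodule F V, (∀ a : A, ∀ v ∈ W, π a v ∈ W) → W = ⊥ ∨ W = ⊤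

/-- Isomorphism of representations of `A`. -/
def RepIso {A V W : Type} [Ring A] [Algebra F A] [AddCommGroup V] [Module F V]
    [AddCommGroup W] [Module F W]
    (π : A →ₐ[F] Module.End F V) (π' : A →ₐ[F] Module.End F W) : Prop :=
  ∃ σ : V ≃ₗ[F] W, ∀ (a : A) (v : V), σ (π a v) = π' a (σ v)

/-!
Neighbouring generators `x`, `y` satisfy `q x y - q⁻¹ y x = q - q⁻¹`, that is
`y x - 1 = q² (x y - 1)`. As `x y` and `y x` have the same nonzero spectrum, a singular `x y` would
have all the numbers `1 - q^{2k}` in its spectrum; hence `x` and `y` are invertible on `V`.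

Let `E(θ)` be the `θ`-eigenspace of `X = x_i`, with `θ ≠ 0`. The defining relations give
`(x_{i+1} - θ⁻¹) E(θ) ⊆ E(q⁻² θ)`, `(x_{i-1} - θ⁻¹) E(θ) ⊆ E(q² θ)` and
`(X - θ)(X - q² θ)(X - q⁻² θ) x_{i+2} E(θ) = 0`. So whenever a set of eigenvalues of `X` is closed
under multiplication by `q²` and `q⁻²` among the eigenvalues, its eigenspaces span a submodule,
which is `0` or `V`. Taking all eigenvalues, `X` is semisimple; taking a maximal unbroken
`q²`-string, the eigenvalues of `X` form one string.

Finally, `x_{i+1} - θ⁻¹` maps the span of `E(θ), E(q⁻² θ), E(q⁻⁴ θ), …` into that of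
`E(q⁻² θ), E(q⁻⁴ θ), …`, which is smaller when `θ` is an eigenvalue of `X`; so it is singular, and
the eigenvalues of `x_{i+1}` are the inverses of those of `x_i`.
-/

open Module.End Polynomial
open scoped Pointwise

lemma isOfFinOrder_inv_iff' {G : Type*} [DivisionMonoid G] {q : G} :
    IsOfFinOrder q⁻¹ ↔ IsOfFinOrder q := by
  simp only [isOfFinOrder_iff_pow_eq_one, inv_pow, inv_eq_one]

lemma injective_pow_of_not_isOfFinOrder {G : Type*} [GroupWithZero G] {r : G} (hr0 : r ≠ 0)
    (hr : ¬ IsOfFinOrder r) : Function.Injective fun n : ℕ => r ^ n := fun _ _ hmn =>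
  injective_pow_iff_not_isOfFinOrder.mpr (mt (Units.isOfFinOrder_val (u := Units.mk0 r hr0)).mpr hr)
    (Units.ext (by simpa using hmn))

lemma pow_ne_one_of_not_isOfFinOrder {G : Type*} [Monoid G] {q : G} (hq : ¬ IsOfFinOrder q) {n : ℕ}
    (hn : 0 < n) : q ^ n ≠ 1 :=
  fun h => hq (isOfFinOrder_iff_pow_eq_one.mpr ⟨n, hn, h⟩)

lemma exists_last_mul_pow_mem {G : Type*} [GroupWithZero G] {S : Set G} (hS : S.Finite) {c r : G}
    (hc : c ∈ S) (hc0 : c ≠ 0) (hr0 : r ≠ 0) (hr : ¬ IsOfFinOrder r) :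
    ∃ m : ℕ, (∀ n ≤ m, c * r ^ n ∈ S) ∧ c * r ^ (m + 1) ∉ S := by
  classical
  have hex : ∃ k : ℕ, c * r ^ k ∉ S := by
    by_contra! hall
    exact Set.infinite_of_injective_forall_mem
      ((mul_right_injective₀ hc0).comp (injective_pow_of_not_isOfFinOrder hr0 hr)) hall hS
  have hpos : Nat.find hex ≠ 0 := fun h => absurd hc (by simpa [h] using Nat.find_spec hex)
  obtain ⟨m, hm⟩ := Nat.exists_eq_succ_of_ne_zero hpos
  refine ⟨m, fun n hn => not_not.mp (Nat.find_min hex (by omega)), ?_⟩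
  rw [← Nat.succ_eq_add_one, ← hm]
  exact Nat.find_spec hex

section QString

variable {K : Type*} [Field K] {q γ θ : K} {d : ℕ}

/-- The `q²`-string `γ q^d, γ q^(d-2), …, γ q^(-d)`, the shape of the eigenvalue set of a generator
of `□_q`. -/
def qString (q γ : K) (d : ℕ) : Set K :=
  {θ : K | ∃ n : ℕ, n ≤ d ∧ θ = γ * q ^ ((d : ℤ) - 2 * (n : ℤ))}

lemma mem_qString_iff (hq0 : q ≠ 0) :
    θ ∈ qString q γ d ↔ ∃ n ≤ d, θ = γ * q ^ d * (q⁻¹ ^ 2) ^ n := by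
  have hpow (n : ℕ) : q ^ ((d : ℤ) - 2 * (n : ℤ)) = q ^ d * (q⁻¹ ^ 2) ^ n := by
    rw [zpow_sub₀ hq0, zpow_mul, zpow_natCast, zpow_natCast, zpow_ofNat, div_eq_mul_inv, inv_pow,
      inv_pow]
  simp only [qString, Set.mem_ofPred_eq, hpow, mul_assoc]

lemma inv_mem_qString_inv (hθ : θ ∈ qString q γ d) : θ⁻¹ ∈ qString q γ⁻¹ d := by
  obtain ⟨n, hn, rfl⟩ := hθ
  refine ⟨d - n, Nat.sub_le d n, ?_⟩
  rw [mul_inv, ← zpow_neg]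
  congr 2
  omega

lemma inv_qString : (qString q γ d)⁻¹ = qString q γ⁻¹ d := by
  ext θ
  rw [Set.mem_inv]
  exact ⟨fun h => by simpa using inv_mem_qString_inv h,
    fun h => by simpa using inv_mem_qString_inv h⟩

lemma exists_maximal_qString {S : Set K} (hS : S.Finite) (hne : S.Nonempty) (h0 : 0 ∉ S)
    (hq0 : q ≠ 0) (hq : ¬ IsOfFinOrder q) :
    ∃ (d : ℕ) (γ : K), γ ≠ 0 ∧ qString q γ d ⊆ S ∧
      (∀ θ ∈ qString q γ d, θ * q ^ 2 ∈ S → θ * q ^ 2 ∈ qString q γ d) ∧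
      ∀ θ ∈ qString q γ d, θ * q⁻¹ ^ 2 ∈ S → θ * q⁻¹ ^ 2 ∈ qString q γ d := by
  have ne_zero {c : K} (hc : c ∈ S) : c ≠ 0 := ne_of_mem_of_not_mem hc h0
  obtain ⟨c, hc⟩ := hne
  obtain ⟨m, hm, hm_last⟩ := exists_last_mul_pow_mem hS hc (ne_zero hc) (pow_ne_zero 2 hq0)
    (mt (·.of_pow two_ne_zero) hq)
  have htop_mem : c * (q ^ 2) ^ m ∈ S := hm m le_rfl
  rw [pow_succ, ← mul_assoc] at hm_last
  generalize c * (q ^ 2) ^ m = top at htop_mem hm_last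
  obtain ⟨d, hd, hd_last⟩ := exists_last_mul_pow_mem hS htop_mem (ne_zero htop_mem)
    (pow_ne_zero 2 (inv_ne_zero hq0)) (mt (·.of_pow two_ne_zero) (mt isOfFinOrder_inv_iff'.mp hq))
  have hmem (θ : K) : θ ∈ qString q (top * (q ^ d)⁻¹) d ↔ ∃ n ≤ d, θ = top * (q⁻¹ ^ 2) ^ n := by
    rw [mem_qString_iff hq0, inv_mul_cancel_right₀ (pow_ne_zero d hq0)]
  refine ⟨d, top * (q ^ d)⁻¹, mul_ne_zero (ne_zero htop_mem) (inv_ne_zero (pow_ne_zero d hq0)),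
    ?_, ?_, ?_⟩ <;> intro θ hθ <;> obtain ⟨n, hn, rfl⟩ := (hmem θ).mp hθ
  · exact hd n hn
  · intro hS'
    cases n with
    | zero => exact absurd hS' (by simpa using hm_last)
    | succ n => exact (hmem _).mpr ⟨n, by omega, by rw [pow_succ]; field_simp⟩
  · rw [mul_assoc, ← pow_succ]
    intro hS'
    rcases hn.lt_or_eq with hlt | rfl
    · exact (hmem _).mpr ⟨n + 1, hlt, rfl⟩
    · exact absurd hS' hd_last

end QString

section EigenspaceSum

variable {K V : Type*} [Field K] [AddCommGroup V] [Module K V] {f : Module.End K V} {θ : K}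
  {T : Set K} {U : Submodule K V}

/-- The sum of the eigenspaces of `f` with eigenvalue in `T`; scalars in `T` that are not
eigenvalues contribute nothing. -/
def eigenspaceSum (f : Module.End K V) (T : Set K) : Submodule K V :=
  ⨆ θ ∈ T, eigenspace f θ

lemma eigenspace_le_eigenspaceSum (hθ : f.HasEigenvalue θ → θ ∈ T) :
    eigenspace f θ ≤ eigenspaceSum f T := by
  by_cases h : f.HasEigenvalue θ
  · exact le_iSup₂_of_le θ (hθ h) le_rfl
  · simp [not_not.mp h]

lemma eigenspaceSum_le (h : ∀ θ ∈ T, f.HasEigenvalue θ → eigenspace f θ ≤ U) :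
    eigenspaceSum f T ≤ U := by
  refine iSup₂_le fun θ hθ => ?_
  by_cases hev : f.HasEigenvalue θ
  · exact h θ hθ hev
  · simp [not_not.mp hev]

lemma eigenspaceSum_mem_invtSubmodule (f : Module.End K V) (T : Set K) :
    eigenspaceSum f T ∈ f.invtSubmodule :=
  eigenspaceSum_le fun θ hθ _ => (eigenspace_mem_invtSubmodule f θ).trans
    (Submodule.comap_mono (eigenspace_le_eigenspaceSum fun _ => hθ))

lemma disjoint_eigenspace_eigenspaceSum (hθ : θ ∉ T) :
    Disjoint (eigenspace f θ) (eigenspaceSum f T) :=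
  (eigenspaces_iSupIndep f).disjoint_biSup hθ

lemma mem_of_eigenspaceSum_eq_top (hT : eigenspaceSum f T = ⊤) (hθ : f.HasEigenvalue θ) :
    θ ∈ T := by
  by_contra h
  exact hθ (disjoint_top.mp (hT ▸ disjoint_eigenspace_eigenspaceSum h))

lemma eigenspaceSum_diff_singleton_lt (hθ : f.HasEigenvalue θ) (hθT : θ ∈ T) :
    eigenspaceSum f (T \ {θ}) < eigenspaceSum f T := by
  refine lt_of_le_not_ge (biSup_mono fun _ => And.left) fun hle => hθ ?_
  exact (disjoint_eigenspace_eigenspaceSum (T := T \ {θ}) (by simp)).eq_bot_of_le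
    ((eigenspace_le_eigenspaceSum fun _ => hθT).trans hle)

lemma ker_aeval_X_sub_C (f : Module.End K V) (a : K) :
    (aeval f (X - C a)).ker = eigenspace f a := by
  rw [eigenspace_def, map_sub, aeval_X, aeval_C, Algebra.algebraMap_eq_smul_one]

lemma ker_aeval_prod_X_sub_C (f : Module.End K V) (s : Finset K) :
    (aeval f (∏ a ∈ s, (X - C a))).ker = eigenspaceSum f s := by
  classical
  induction s using Finset.induction_on with
  | empty => simp [eigenspaceSum, Module.End.one_eq_id]
  | insert a s ha ih =>
    have hcop : IsCoprime (X - C a) (∏ b ∈ s, (X - C b)) := IsCoprime.prod_right fun b hb =>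
      isCoprime_X_sub_C_of_isUnit_sub (sub_ne_zero.mpr (ne_of_mem_of_not_mem hb ha).symm).isUnit
    rw [Finset.prod_insert ha, ← sup_ker_aeval_eq_ker_aeval_mul_of_coprime f hcop, ih,
      ker_aeval_X_sub_C, eigenspaceSum, eigenspaceSum, Finset.coe_insert, iSup_insert]

lemma ker_ne_bot_of_map_lt [FiniteDimensional K U] (h : U.map f < U) : f.ker ≠ ⊥ := fun hker =>
  (Submodule.finrank_lt_finrank_of_lt h).ne
    (Submodule.equivMapOfInjective f (LinearMap.ker_eq_bot.mp hker) U).finrank_eq.symm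

end EigenspaceSum

/-- The `q`-Weyl relation `(q x y - q⁻¹ y x) / (q - q⁻¹) = 1` between neighbouring generators of
`□_q`, with the denominator cleared. -/
def IsQWeylPair {K A : Type*} [Field K] [Ring A] [Algebra K A] (q : K) (x y : A) : Prop :=
  q • (x * y) - q⁻¹ • (y * x) = (q - q⁻¹) • (1 : A)

namespace IsQWeylPair

section Algebra

variable {K A B : Type*} [Field K] [Ring A] [Algebra K A] [Ring B] [Algebra K B] {q : K} {x y : A}

lemma symm (h : IsQWeylPair q x y) : IsQWeylPair q⁻¹ y x := by
  rw [IsQWeylPair, inv_inv, ← neg_sub, h, ← neg_smul, neg_sub]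

lemma map (h : IsQWeylPair q x y) (φ : A →ₐ[K] B) : IsQWeylPair q (φ x) (φ y) := by
  simpa [IsQWeylPair] using congrArg φ h

lemma mul_comm_eq (h : IsQWeylPair q x y) (hq0 : q ≠ 0) :
    y * x = q ^ 2 • (x * y) + (1 - q ^ 2) • (1 : A) :=
  calc y * x = q • (q • (x * y) - (q • (x * y) - q⁻¹ • (y * x))) := by
        rw [sub_sub_cancel, smul_inv_smul₀ hq0]
    _ = q • (q • (x * y) - (q - q⁻¹) • (1 : A)) := by rw [h]
    _ = q ^ 2 • (x * y) + (1 - q ^ 2) • (1 : A) := by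
        match_scalars <;> field_simp
        ring

lemma one_sub_sq_mul_mem_spectrum (h : IsQWeylPair q x y) (hq0 : q ≠ 0) {c : K}
    (hc : 1 - c ∈ spectrum K (x * y)) : 1 - q ^ 2 * c ∈ spectrum K (y * x) := by
  have key : algebraMap K A (1 - q ^ 2 * c) - y * x =
      Units.mk0 (q ^ 2) (pow_ne_zero 2 hq0) • (algebraMap K A (1 - c) - x * y) := by
    rw [h.mul_comm_eq hq0, Units.smul_mk0, Algebra.algebraMap_eq_smul_one,
      Algebra.algebraMap_eq_smul_one]
    module
  rwa [spectrum.mem_iff, key, isUnit_smul_iff, ← spectrum.mem_iff]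

lemma one_sub_pow_mem_spectrum (h : IsQWeylPair q x y) (hq0 : q ≠ 0) (hq : ¬ IsOfFinOrder q)
    (h0 : 0 ∈ spectrum K (x * y)) (k : ℕ) : 1 - (q ^ 2) ^ k ∈ spectrum K (x * y) := by
  induction k with
  | zero => simpa using h0
  | succ k ih =>
    have hyx : 1 - (q ^ 2) ^ (k + 1) ∈ spectrum K (y * x) := by
      rw [pow_succ']
      exact h.one_sub_sq_mul_mem_spectrum hq0 ih
    have hne : 1 - (q ^ 2) ^ (k + 1) ≠ 0 := sub_ne_zero.mpr
      (pow_ne_one_of_not_isOfFinOrder (mt (·.of_pow two_ne_zero) hq) k.succ_pos).symm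
    have hmem : 1 - (q ^ 2) ^ (k + 1) ∈ spectrum K (x * y) \ {0} :=
      spectrum.nonzero_mul_comm (𝕜 := K) x y ▸ ⟨hyx, hne⟩
    exact hmem.1

lemma isUnit_mul (h : IsQWeylPair q x y) (hq0 : q ≠ 0) (hq : ¬ IsOfFinOrder q)
    (hfin : (spectrum K (x * y)).Finite) : IsUnit (x * y) := by
  by_contra hsing
  exact Set.infinite_of_injective_forall_mem
    (sub_right_injective.comp
      (injective_pow_of_not_isOfFinOrder (pow_ne_zero 2 hq0) (mt (·.of_pow two_ne_zero) hq)))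
    (h.one_sub_pow_mem_spectrum hq0 hq ((spectrum.zero_mem_iff K).mpr hsing)) hfin

end Algebra

section Eigenvalues

variable {K V : Type*} [Field K] [AddCommGroup V] [Module K V] {q θ : K} {X Y : Module.End K V}
  {T : Set K}

lemma apply_sub_inv_smul_mem_eigenspace (h : IsQWeylPair q X Y) (hq0 : q ≠ 0) (hθ : θ ≠ 0) {v : V}
    (hv : v ∈ eigenspace X θ) : Y v - θ⁻¹ • v ∈ eigenspace X (θ * q⁻¹ ^ 2) := by
  rw [mem_eigenspace_iff] at hv ⊢
  have hXY : X (Y v) = q⁻¹ ^ 2 • Y (X v) + (1 - q⁻¹ ^ 2) • v :=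
    LinearMap.congr_fun (h.symm.mul_comm_eq (inv_ne_zero hq0)) v
  rw [map_sub, map_smul, hXY, hv, map_smul]
  match_scalars <;> field_simp
  ring

lemma eigenspaceSum_mem_invtSubmodule (h : IsQWeylPair q X Y) (hq0 : q ≠ 0)
    (hX0 : ¬ X.HasEigenvalue 0)
    (hT : ∀ θ ∈ T, X.HasEigenvalue (θ * q⁻¹ ^ 2) → θ * q⁻¹ ^ 2 ∈ T) :
    eigenspaceSum X T ∈ Y.invtSubmodule := by
  refine eigenspaceSum_le fun θ hθT hθ v hv => ?_
  have hshift := eigenspace_le_eigenspaceSum (hT θ hθT)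
    (h.apply_sub_inv_smul_mem_eigenspace hq0 (fun h0 => hX0 (h0 ▸ hθ)) hv)
  simpa using add_mem hshift
    (Submodule.smul_mem _ θ⁻¹ (eigenspace_le_eigenspaceSum (fun _ => hθT) hv))

lemma map_sub_eigenspaceSum_le (h : IsQWeylPair q X Y) (hq0 : q ≠ 0) (hX0 : ¬ X.HasEigenvalue 0)
    (hT : ∀ μ ∈ T, μ * q⁻¹ ^ 2 ∈ T \ {θ}) :
    (eigenspaceSum X T).map (Y - θ⁻¹ • 1) ≤ eigenspaceSum X (T \ {θ}) := by
  rw [Submodule.map_le_iff_le_comap]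
  refine eigenspaceSum_le fun μ hμT hμ v hv => ?_
  have hshift := eigenspace_le_eigenspaceSum (fun _ => hT μ hμT)
    (h.apply_sub_inv_smul_mem_eigenspace hq0 (fun h0 => hX0 (h0 ▸ hμ)) hv)
  have hrest : (μ⁻¹ - θ⁻¹) • v ∈ eigenspaceSum X (T \ {θ}) := by
    by_cases hμθ : μ = θ
    · simp [hμθ]
    · have hμT' : μ ∈ T \ {θ} := ⟨hμT, hμθ⟩
      exact Submodule.smul_mem _ _ (eigenspace_le_eigenspaceSum (fun _ => hμT') hv)
  have hsplit : (Y - θ⁻¹ • 1) v = (Y v - μ⁻¹ • v) + (μ⁻¹ - θ⁻¹) • v := by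
    simp only [LinearMap.sub_apply, LinearMap.smul_apply, Module.End.one_apply]
    module
  rw [Submodule.mem_comap, hsplit]
  exact add_mem hshift hrest

variable [FiniteDimensional K V]

lemma not_hasEigenvalue_zero_right (h : IsQWeylPair q X Y) (hq0 : q ≠ 0) (hq : ¬ IsOfFinOrder q) :
    ¬ Y.HasEigenvalue 0 := by
  intro hY
  obtain ⟨v, hv⟩ := hY.exists_hasEigenvector
  have hker := (LinearMap.isUnit_iff_ker_eq_bot _).mp (h.isUnit_mul hq0 hq (finite_spectrum _))
  exact hv.2 (LinearMap.ker_eq_bot'.mp hker v (by simp [hv.apply_eq_smul]))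

lemma not_hasEigenvalue_zero_left (h : IsQWeylPair q X Y) (hq0 : q ≠ 0) (hq : ¬ IsOfFinOrder q) :
    ¬ X.HasEigenvalue 0 :=
  h.symm.not_hasEigenvalue_zero_right (inv_ne_zero hq0) (mt isOfFinOrder_inv_iff'.mp hq)

lemma hasEigenvalue_inv (h : IsQWeylPair q X Y) (hq0 : q ≠ 0) (hq : ¬ IsOfFinOrder q)
    (hθ : X.HasEigenvalue θ) : Y.HasEigenvalue θ⁻¹ := by
  have hX0 := h.not_hasEigenvalue_zero_left hq0 hq
  have hθ0 : θ ≠ 0 := fun h0 => hX0 (h0 ▸ hθ)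
  have hq' : ¬ IsOfFinOrder (q⁻¹ ^ 2) :=
    mt (·.of_pow two_ne_zero) (mt isOfFinOrder_inv_iff'.mp hq)
  let T : Set K := Set.range fun k : ℕ => θ * (q⁻¹ ^ 2) ^ k
  have hθT : θ ∈ T := Set.mem_range.mpr ⟨0, by simp⟩
  have hT : ∀ μ ∈ T, μ * q⁻¹ ^ 2 ∈ T \ {θ} := by
    rintro _ ⟨k, rfl⟩
    refine ⟨⟨k + 1, by simp only [pow_succ, mul_assoc]⟩, fun hk => ?_⟩
    rw [Set.mem_singleton_iff, mul_assoc, ← pow_succ, mul_eq_left₀ hθ0] at hk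
    exact pow_ne_one_of_not_isOfFinOrder hq' k.succ_pos hk
  rw [hasEigenvalue_iff, eigenspace_def]
  exact ker_ne_bot_of_map_lt ((h.map_sub_eigenspaceSum_le hq0 hX0 hT).trans_lt
    (eigenspaceSum_diff_singleton_lt hθ hθT))

lemma hasEigenvalue_inv_iff (h : IsQWeylPair q X Y) (hq0 : q ≠ 0) (hq : ¬ IsOfFinOrder q) :
    Y.HasEigenvalue θ⁻¹ ↔ X.HasEigenvalue θ :=
  ⟨fun hY => by simpa using
      h.symm.hasEigenvalue_inv (inv_ne_zero hq0) (mt isOfFinOrder_inv_iff'.mp hq) hY,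
    h.hasEigenvalue_inv hq0 hq⟩

end Eigenvalues

end IsQWeylPair

/-- The cubic `q`-Serre relation `x³ z - [3] x² z x + [3] x z x² - z x³ = 0` between opposite
generators of `□_q`, with the negative terms moved to the right-hand side. -/
def IsQSerrePair {K A : Type*} [Field K] [Ring A] [Algebra K A] (q : K) (x z : A) : Prop :=
  x ^ 3 * z + ((q ^ 3 - (q⁻¹) ^ 3) / (q - q⁻¹)) • (x * z * x ^ 2) =
    ((q ^ 3 - (q⁻¹) ^ 3) / (q - q⁻¹)) • (x ^ 2 * z * x) + z * x ^ 3

lemma quantum_three_eq {K : Type*} [Field K] {q : K} (hq0 : q ≠ 0) (hq2 : q ^ 2 ≠ 1) :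
    (q ^ 3 - q⁻¹ ^ 3) / (q - q⁻¹) = q ^ 2 + 1 + q⁻¹ ^ 2 := by
  have hne : q - q⁻¹ ≠ 0 := by
    intro he
    field_simp at he
    exact hq2 (by linear_combination he)
  rw [div_eq_iff hne]
  field_simp
  ring

namespace IsQSerrePair

lemma map {K A B : Type*} [Field K] [Ring A] [Algebra K A] [Ring B] [Algebra K B] {q : K} {x z : A}
    (h : IsQSerrePair q x z) (φ : A →ₐ[K] B) : IsQSerrePair q (φ x) (φ z) := by
  simpa only [IsQSerrePair, map_add, map_mul, map_smul, map_pow] using congrArg φ h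

variable {K V : Type*} [Field K] [AddCommGroup V] [Module K V] {q θ : K} {X Z : Module.End K V}
  {T : Set K}

lemma aeval_apply_eq_zero (h : IsQSerrePair q X Z) (hq0 : q ≠ 0) (hq2 : q ^ 2 ≠ 1) {v : V}
    (hv : v ∈ eigenspace X θ) :
    aeval X ((Polynomial.X - C θ) *
      ((Polynomial.X - C (θ * q ^ 2)) * (Polynomial.X - C (θ * q⁻¹ ^ 2)))) (Z v) = 0 := by
  rw [mem_eigenspace_iff] at hv
  have hserre := LinearMap.congr_fun h v
  rw [quantum_three_eq hq0 hq2] at hserre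
  simp only [LinearMap.add_apply, LinearMap.smul_apply, Module.End.mul_apply, pow_succ, pow_zero,
    one_mul, hv, map_smul] at hserre
  simp only [map_mul, map_sub, aeval_X, aeval_C, Module.End.mul_apply, LinearMap.sub_apply,
    Module.algebraMap_end_apply, map_smul]
  rw [eq_sub_of_add_eq hserre]
  match_scalars <;> field_simp <;> ring

lemma apply_mem_eigenspaceSum (h : IsQSerrePair q X Z) (hq0 : q ≠ 0) (hq : ¬ IsOfFinOrder q)
    (hθ : θ ≠ 0) {v : V} (hv : v ∈ eigenspace X θ) :
    Z v ∈ eigenspaceSum X {θ, θ * q ^ 2, θ * q⁻¹ ^ 2} := by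
  classical
  have hq2 : q ^ 2 ≠ 1 := pow_ne_one_of_not_isOfFinOrder hq two_pos
  have hup : θ ≠ θ * q ^ 2 := fun he => hq2 ((mul_eq_left₀ hθ).mp he.symm)
  have hdown : θ ≠ θ * q⁻¹ ^ 2 := fun he =>
    hq2 (by simpa using (mul_eq_left₀ hθ).mp he.symm)
  have hupdown : θ * q ^ 2 ≠ θ * q⁻¹ ^ 2 := by
    intro he
    field_simp at he
    exact pow_ne_one_of_not_isOfFinOrder hq four_pos (by linear_combination he)
  have hnotin : θ ∉ ({θ * q ^ 2, θ * q⁻¹ ^ 2} : Finset K) := by simp [hup, hdown, -inv_pow]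
  have hker : Z v ∈ (aeval X (∏ a ∈ {θ, θ * q ^ 2, θ * q⁻¹ ^ 2}, (Polynomial.X - C a))).ker := by
    rw [Finset.prod_insert hnotin, Finset.prod_pair hupdown, LinearMap.mem_ker]
    exact h.aeval_apply_eq_zero hq0 hq2 hv
  rw [ker_aeval_prod_X_sub_C] at hker
  simpa using hker

lemma eigenspaceSum_mem_invtSubmodule (h : IsQSerrePair q X Z) (hq0 : q ≠ 0)
    (hq : ¬ IsOfFinOrder q) (hX0 : ¬ X.HasEigenvalue 0)
    (hup : ∀ θ ∈ T, X.HasEigenvalue (θ * q ^ 2) → θ * q ^ 2 ∈ T)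
    (hdown : ∀ θ ∈ T, X.HasEigenvalue (θ * q⁻¹ ^ 2) → θ * q⁻¹ ^ 2 ∈ T) :
    eigenspaceSum X T ∈ Z.invtSubmodule := by
  refine eigenspaceSum_le fun θ hθT hθ v hv => ?_
  refine eigenspaceSum_le (fun μ hμ hev => eigenspace_le_eigenspaceSum fun _ => ?_)
    (h.apply_mem_eigenspaceSum hq0 hq (fun h0 => hX0 (h0 ▸ hθ)) hv)
  rcases hμ with rfl | rfl | rfl
  exacts [hθT, hup θ hθT hev, hdown θ hθT hev]

end IsQSerrePair

lemma mem_invtSubmodule_of_adjoin_eq_top {K A V : Type*} [Field K] [Ring A] [Algebra K A]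
    [AddCommGroup V] [Module K V] (π : A →ₐ[K] Module.End K V) {s : Set A}
    (hs : Algebra.adjoin K s = ⊤) {U : Submodule K V} (hU : ∀ a ∈ s, U ∈ (π a).invtSubmodule)
    (a : A) : U ∈ (π a).invtSubmodule := by
  have ha : a ∈ Algebra.adjoin K s := hs ▸ Algebra.mem_top
  induction ha using Algebra.adjoin_induction with
  | mem a ha => exact hU a ha
  | algebraMap c =>
    intro v hv
    simpa using U.smul_mem c hv
  | add a b _ _ iha ihb =>
    intro v hv
    simpa using U.add_mem (iha hv) (ihb hv)
  | mul a b _ _ iha ihb =>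
    intro v hv
    simpa using iha (ihb hv)

section Box

variable {F} {q : F} {V : Type} [AddCommGroup V] [Module F V] {π : BoxQ F q →ₐ[F] Module.End F V}

lemma isQWeylPair_bx (q : F) (i : ZMod 4) : IsQWeylPair q (bx F q i) (bx F q (i + 1)) := by
  simpa [IsQWeylPair, bx] using RingQuot.mkAlgHom_rel F (BoxRel.rel1 (q := q) i)

lemma isQSerrePair_bx (q : F) (i : ZMod 4) : IsQSerrePair q (bx F q i) (bx F q (i + 2)) := by
  simpa only [IsQSerrePair, bx, map_add, map_mul, map_smul, map_pow] using
    RingQuot.mkAlgHom_rel F (BoxRel.rel2 (q := q) i)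

lemma adjoin_range_bx (q : F) : Algebra.adjoin F (Set.range (bx F q)) = ⊤ := by
  have hrange : Set.range (bx F q) = RingQuot.mkAlgHom F (BoxRel F q) '' Set.range (ι F) := by
    rw [← Set.range_comp]
    rfl
  rw [hrange, ← AlgHom.map_adjoin, FreeAlgebra.adjoin_range_ι, Algebra.map_top,
    AlgHom.range_eq_top]
  exact RingQuot.mkAlgHom_surjective F (BoxRel F q)

lemma zmod_four_cases (i j : ZMod 4) : j = i ∨ j = i + 1 ∨ j = i + 2 ∨ i = j + 1 := by
  revert i j
  decide

variable [FiniteDimensional F V]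

lemma not_hasEigenvalue_bx_zero (π : BoxQ F q →ₐ[F] Module.End F V) (hq0 : q ≠ 0)
    (hq : ¬ IsOfFinOrder q) (i : ZMod 4) : ¬ (π (bx F q i)).HasEigenvalue 0 :=
  ((isQWeylPair_bx q i).map π).not_hasEigenvalue_zero_left hq0 hq

lemma eigenspaceSum_bx_eq_top (hirr : IsIrrep F π) (hq0 : q ≠ 0) (hq : ¬ IsOfFinOrder q)
    {i : ZMod 4} {T : Set F}
    (hup : ∀ θ ∈ T, (π (bx F q i)).HasEigenvalue (θ * q ^ 2) → θ * q ^ 2 ∈ T)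
    (hdown : ∀ θ ∈ T, (π (bx F q i)).HasEigenvalue (θ * q⁻¹ ^ 2) → θ * q⁻¹ ^ 2 ∈ T)
    {θ : F} (hθT : θ ∈ T) (hθ : (π (bx F q i)).HasEigenvalue θ) :
    eigenspaceSum (π (bx F q i)) T = ⊤ := by
  have hX0 := not_hasEigenvalue_bx_zero π hq0 hq i
  have hgen (j : ZMod 4) : eigenspaceSum (π (bx F q i)) T ∈ (π (bx F q j)).invtSubmodule := by
    rcases zmod_four_cases i j with rfl | rfl | rfl | rfl
    · exact eigenspaceSum_mem_invtSubmodule _ T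
    · exact ((isQWeylPair_bx q i).map π).eigenspaceSum_mem_invtSubmodule hq0 hX0 hdown
    · exact ((isQSerrePair_bx q i).map π).eigenspaceSum_mem_invtSubmodule hq0 hq hX0 hup hdown
    · exact ((isQWeylPair_bx q j).map π).symm.eigenspaceSum_mem_invtSubmodule (inv_ne_zero hq0) hX0
        (by simpa only [inv_inv] using hup)
  have hinvt := mem_invtSubmodule_of_adjoin_eq_top π (adjoin_range_bx q)
    (Set.forall_mem_range.mpr hgen)
  refine (hirr.2 _ hinvt).resolve_left fun hbot => hθ ?_
  exact le_bot_iff.mp (hbot ▸ eigenspace_le_eigenspaceSum fun _ => hθT)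

lemma semisimpleOn_bx (hirr : IsIrrep F π) (hq0 : q ≠ 0) (hq : ¬ IsOfFinOrder q) {i : ZMod 4}
    (hne : (EigSet F (π (bx F q i))).Nonempty) : SemisimpleOn F (π (bx F q i)) := by
  obtain ⟨θ, hθ⟩ := hne
  simpa [SemisimpleOn, eigenspaceSum] using
    eigenspaceSum_bx_eq_top hirr hq0 hq (T := Set.univ) (by simp) (by simp) (Set.mem_univ θ) hθ

lemma exists_eigSet_bx_eq_qString (hirr : IsIrrep F π) (hq0 : q ≠ 0) (hq : ¬ IsOfFinOrder q)
    {i : ZMod 4} (hne : (EigSet F (π (bx F q i))).Nonempty) :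
    ∃ (d : ℕ) (γ : F), γ ≠ 0 ∧ EigSet F (π (bx F q i)) = qString q γ d := by
  obtain ⟨d, γ, hγ, hsub, hup, hdown⟩ := exists_maximal_qString
    (finite_hasEigenvalue (π (bx F q i))) hne (not_hasEigenvalue_bx_zero π hq0 hq i) hq0 hq
  have hmem : γ * q ^ d ∈ qString q γ d := (mem_qString_iff hq0).mpr ⟨0, d.zero_le, by simp⟩
  have htop := eigenspaceSum_bx_eq_top hirr hq0 hq hup hdown hmem (hsub hmem)
  exact ⟨d, γ, hγ, Set.Subset.antisymm (fun _ => mem_of_eigenspaceSum_eq_top htop) hsub⟩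

lemma eigSet_bx_add_one (π : BoxQ F q →ₐ[F] Module.End F V) (hq0 : q ≠ 0) (hq : ¬ IsOfFinOrder q)
    (i : ZMod 4) : EigSet F (π (bx F q (i + 1))) = (EigSet F (π (bx F q i)))⁻¹ := by
  ext θ
  rw [Set.mem_inv, ← inv_inv θ, inv_inv θ⁻¹]
  exact ((isQWeylPair_bx q i).map π).hasEigenvalue_inv_iff hq0 hq

lemma eigSet_bx_nonempty (hq0 : q ≠ 0) (hq : ¬ IsOfFinOrder q) {i : ZMod 4}
    (hi : (EigSet F (π (bx F q i))).Nonempty) (j : ZMod 4) :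
    (EigSet F (π (bx F q j))).Nonempty := by
  have hadd (k : ℕ) : (EigSet F (π (bx F q (i + k)))).Nonempty := by
    induction k with
    | zero => simpa using hi
    | succ k ih =>
      rw [Nat.cast_succ, ← add_assoc, eigSet_bx_add_one π hq0 hq, Set.nonempty_inv]
      exact ih
  simpa using hadd (j - i).val

theorem stmt6_general (hirr : IsIrrep F π) (hq0 : q ≠ 0) (hq : ¬ IsOfFinOrder q) {i₀ : ZMod 4}
    (hi₀ : (EigSet F (π (bx F q i₀))).Nonempty) :
    (∀ i : ZMod 4, SemisimpleOn F (π (bx F q i))) ∧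
    ∃ (d : ℕ) (γ : F), γ ≠ 0 ∧
      EigSet F (π (bx F q 0)) = qString q γ d ∧ EigSet F (π (bx F q 2)) = qString q γ d ∧
      EigSet F (π (bx F q 1)) = qString q γ⁻¹ d ∧ EigSet F (π (bx F q 3)) = qString q γ⁻¹ d := by
  have hne := eigSet_bx_nonempty hq0 hq hi₀
  refine ⟨fun i => semisimpleOn_bx hirr hq0 hq (hne i), ?_⟩
  obtain ⟨d, γ, hγ, h0⟩ := exists_eigSet_bx_eq_qString hirr hq0 hq (hne 0)
  have h1 : EigSet F (π (bx F q 1)) = qString q γ⁻¹ d := by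
    rw [← zero_add (1 : ZMod 4), eigSet_bx_add_one π hq0 hq, h0, inv_qString]
  have h2 : EigSet F (π (bx F q 2)) = qString q γ d := by
    rw [← one_add_one_eq_two, eigSet_bx_add_one π hq0 hq, h1, inv_qString, inv_inv]
  have h3 : EigSet F (π (bx F q 3)) = qString q γ⁻¹ d := by
    rw [← two_add_one_eq_three, eigSet_bx_add_one π hq0 hq, h2, inv_qString]
  exact ⟨d, γ, hγ, h0, h2, h1, h3⟩

end Box

/-- Each generator `x_i` of `□_q` acts semisimply on a finite-dimensional irreducible
`□_q`-module; moreover there are `d ∈ ℕ` and nonzero `γ` such that `x₀, x₂` have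
eigenvalue set `{γ q^(d-2n)}` and `x₁, x₃` have eigenvalue set `{γ⁻¹ q^(d-2n)}`. -/
theorem stmt6 [IsAlgClosed F] [CharZero F] (q : F) (hq0 : q ≠ 0)
    (hq1 : ∀ n : ℕ, 0 < n → q ^ n ≠ 1)
    (V : Type) [AddCommGroup V] [Module F V] [FiniteDimensional F V]
    (π : BoxQ F q →ₐ[F] Module.End F V) (hirr : IsIrrep F π) :
    (∀ i : ZMod 4, SemisimpleOn F (π (bx F q i))) ∧
    ∃ (d : ℕ) (γ : F), γ ≠ 0 ∧
      EigSet F (π (bx F q 0)) =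
        {θ : F | ∃ n : ℕ, n ≤ d ∧ θ = γ * q ^ ((d : ℤ) - 2 * (n : ℤ))} ∧
      EigSet F (π (bx F q 2)) =
        {θ : F | ∃ n : ℕ, n ≤ d ∧ θ = γ * q ^ ((d : ℤ) - 2 * (n : ℤ))} ∧
      EigSet F (π (bx F q 1)) =
        {θ : F | ∃ n : ℕ, n ≤ d ∧ θ = γ⁻¹ * q ^ ((d : ℤ) - 2 * (n : ℤ))} ∧
      EigSet F (π (bx F q 3)) =
        {θ : F | ∃ n : ℕ, n ≤ d ∧ θ = γ⁻¹ * q ^ ((d : ℤ) - 2 * (n : ℤ))} := by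
  have := hirr.1
  have hq : ¬ IsOfFinOrder q := by simpa [isOfFinOrder_iff_pow_eq_one] using hq1
  exact stmt6_general hirr hq0 hq (i₀ := 0) (exists_eigenvalue _)
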